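/- Let x ∈ B_n be a braid lying in its own Super Summit Set (x ∈ SSS(x)), not rigid, but conjugate to some rigid braid. If g is any positive braid such that g^{-1} x g is rigid, then there is a positive integer k ≤ (n(n−1)/2)·|g| such that 𝔰^k(x) is rigid, where 𝔰 denotes the cyclic sliding operation. -/

import Mathlib

namespace Braids

/-- The braid relations on `n` strands (Artin generators `σ_i`, `i : Fin (n-1)`):
`σ_i σ_j σ_i = σ_j σ_i σ_j` for `|i-j| = 1` and `σ_i σ_j = σ_j σ_i` for `|i-j| ≥ 2`. -/
def braidRels (n : ℕ) : Set (FreeGroup (Fin (n - 1))) :=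
  {r | (∃ i j : Fin (n - 1), (i : ℕ) + 1 = (j : ℕ) ∧
          r = .of i * .of j * .of i * (.of j * .of i * .of j)⁻¹) ∨
       (∃ i j : Fin (n - 1), (i : ℕ) + 2 ≤ (j : ℕ) ∧
          r = .of i * .of j * (.of j * .of i)⁻¹)}

/-- The braid group on `n` strands. -/
abbrev Braid (n : ℕ) := PresentedGroup (braidRels n)

/-- The Artin generator `σ_i` of the braid group on `n` strands. -/
def σ {n : ℕ} (i : Fin (n - 1)) : Braid n := PresentedGroup.of i

/-- The Artin generator, with out-of-range indices mapped to `1`. -/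
def σ' (n : ℕ) (i : ℕ) : Braid n := if h : i < n - 1 then σ ⟨i, h⟩ else 1

/-- The monoid of positive braids. -/
def Pos (n : ℕ) : Submonoid (Braid n) := Submonoid.closure (Set.range (σ (n := n)))

/-- The prefix order: `x ≼ y` iff `x⁻¹ * y` is a positive braid. -/
def PrefixLE {n : ℕ} (x y : Braid n) : Prop := x⁻¹ * y ∈ Pos n

/-- The Garside half-twist `Δ = σ₁(σ₂σ₁)(σ₃σ₂σ₁)⋯(σ_{n-1}⋯σ₁)` (0-based indices). -/
def Δ (n : ℕ) : Braid n :=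
  ((((List.range (n - 1)).map fun k => (List.range (k + 1)).reverse).flatten).map (σ' n)).prod

/-- A braid is simple (a positive permutation braid) if it is a positive prefix of `Δ`. -/
def IsSimple {n : ℕ} (s : Braid n) : Prop := s ∈ Pos n ∧ PrefixLE s (Δ n)

/-- A letter of the alphabet consisting of simple elements and their inverses. -/
def SimpleOrInv {n : ℕ} (a : Braid n) : Prop := IsSimple a ∨ IsSimple a⁻¹

/-- `len x` is `|x|`: the minimal length of a word representing `x` whose letters are
simple elements and their inverses. -/
noncomputable def len {n : ℕ} (x : Braid n) : ℕ :=
  sInf {k | ∃ l : List (Braid n), (∀ a ∈ l, SimpleOrInv a) ∧ l.prod = x ∧ l.length = k}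

open scoped Classical

/-- A pair of simple elements `(a, b)` is left-weighted if for every non-trivial positive
prefix `t` of `b`, the product `a * t` is not simple. -/
def LeftWeighted {n : ℕ} (a b : Braid n) : Prop :=
  ∀ t : Braid n, t ∈ Pos n → PrefixLE t b → t ≠ 1 → ¬IsSimple (a * t)

/-- `InfIs x p` says `p = inf(x) = max {m : ℤ | Δ^m ≼ x}`. -/
def InfIs {n : ℕ} (x : Braid n) (p : ℤ) : Prop :=
  PrefixLE (Δ n ^ p) x ∧ ¬PrefixLE (Δ n ^ (p + 1)) x

/-- `IsNormalForm x p l` says that `Δ^p * l.prod` is the left normal form of `x`: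
`p = inf(x)`, the factors are simple, the last factor is non-trivial, and consecutive
pairs of factors are left-weighted.  The canonical length is `ℓ(x) = l.length`. -/
def IsNormalForm {n : ℕ} (x : Braid n) (p : ℤ) (l : List (Braid n)) : Prop :=
  x = Δ n ^ p * l.prod ∧ InfIs x p ∧ (∀ s ∈ l, IsSimple s) ∧
    l.getLast? ≠ some 1 ∧ List.Chain' LeftWeighted l

/-- The canonical length `ℓ(x)`: the number of simple factors in the left normal form. -/
noncomputable def clen {n : ℕ} (x : Braid n) : ℕ :=
  sInf {r | ∃ p l, IsNormalForm x p l ∧ l.length = r}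

/-- `InSSS x y` : `y` belongs to the Super Summit Set of `x`, i.e. `y` is a conjugate of `x`
of minimal canonical length among all conjugates of `x`. -/
def InSSS {n : ℕ} (x y : Braid n) : Prop :=
  IsConj x y ∧ ∀ z : Braid n, IsConj x z → clen y ≤ clen z

/-- `IsPreferredPrefix x t` : `t` is the preferred prefix `𝔭(x)`.  If `x = Δ^p x₁ ⋯ x_r`
is in left normal form with `r > 0`, then `t` is the maximal positive prefix of
`τ^{-p}(x₁) = Δ^p x₁ Δ^{-p}` such that `x_r * t` is simple; if `r = 0` then `t = 1`. -/
def IsPreferredPrefix {n : ℕ} (x t : Braid n) : Prop :=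
  ∃ p l, IsNormalForm x p l ∧
    ((l = [] ∧ t = 1) ∨
      ∃ x₁ xr : Braid n, l.head? = some x₁ ∧ l.getLast? = some xr ∧
        t ∈ Pos n ∧ PrefixLE t (Δ n ^ p * x₁ * (Δ n ^ p)⁻¹) ∧ IsSimple (xr * t) ∧
        ∀ t' : Braid n, t' ∈ Pos n → PrefixLE t' (Δ n ^ p * x₁ * (Δ n ^ p)⁻¹) →
          IsSimple (xr * t') → PrefixLE t' t)

/-- Cyclic sliding: conjugation of `x` by its preferred prefix `𝔭(x)`. -/
noncomputable def slide {n : ℕ} (x : Braid n) : Braid n :=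
  if h : ∃ t, IsPreferredPrefix x t then h.choose⁻¹ * x * h.choose else x

/-- A braid is rigid if its preferred prefix is trivial. -/
def Rigid {n : ℕ} (x : Braid n) : Prop := IsPreferredPrefix x 1

section Monoid

/-- adjacency of generators -/
def adj {N : ℕ} (i j : Fin N) : Prop := (i : ℕ) + 1 = j ∨ (j : ℕ) + 1 = i

theorem adj_symm {N : ℕ} {i j : Fin N} (h : adj i j) : adj j i := Or.symm h

/-- relations of the positive braid monoid -/
inductive MRel (N : ℕ) : FreeMonoid (Fin N) → FreeMonoid (Fin N) → Prop
  | br (i j : Fin N) : (i : ℕ) + 1 = j →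
      MRel N (.of i * .of j * .of i) (.of j * .of i * .of j)
  | cm (i j : Fin N) : (i : ℕ) + 2 ≤ j → MRel N (.of i * .of j) (.of j * .of i)

/-- positive braid monoid -/
abbrev BM (N : ℕ) := PresentedMonoid (MRel N)

/-- generator -/
def gen {N : ℕ} (i : Fin N) : BM N := PresentedMonoid.of (MRel N) i

variable {N : ℕ}

theorem gen_br' (i j : Fin N) (h : (i : ℕ) + 1 = j) :
    gen i * gen j * gen i = gen j * gen i * gen j :=
  PresentedMonoid.mk_eq_mk_of_rel (MRel.br i j h)

theorem gen_cm' (i j : Fin N) (h : (i : ℕ) + 2 ≤ j) : gen i * gen j = gen j * gen i :=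
  PresentedMonoid.mk_eq_mk_of_rel (MRel.cm i j h)

theorem gen_br {i j : Fin N} (h : adj i j) (X : BM N) :
    gen i * (gen j * (gen i * X)) = gen j * (gen i * (gen j * X)) := by
  rcases h with h | h
  · have := congrArg (· * X) (gen_br' i j h)
    simpa [mul_assoc] using this
  · have := congrArg (· * X) (gen_br' j i h)
    simpa [mul_assoc] using this.symm

theorem gen_cm {i j : Fin N} (h : ¬ adj i j) (X : BM N) :
    gen i * (gen j * X) = gen j * (gen i * X) := by
  by_cases hij : i = j
  · rw [hij]
  have hne : (i : ℕ) ≠ j := fun h => hij (Fin.ext h)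
  unfold adj at h
  rcases lt_or_gt_of_ne hne with h' | h'
  · have := congrArg (· * X) (gen_cm' i j (by omega))
    simpa [mul_assoc] using this
  · have := congrArg (· * X) (gen_cm' j i (by omega))
    simpa [mul_assoc] using this.symm

/-- length -/
def blen : BM N →* Multiplicative ℕ :=
  PresentedMonoid.lift (fun _ => Multiplicative.ofAdd 1) (by
    intro a b h
    cases h <;> simp [FreeMonoid.lift_eval_of])

/-- length as a natural number -/
def ln (x : BM N) : ℕ := (blen x).toAdd

@[simp] theorem ln_mul (x y : BM N) : ln (x * y) = ln x + ln y := by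
  simp [ln]
@[simp] theorem ln_one : ln (1 : BM N) = 0 := by simp [ln]
@[simp] theorem ln_gen (i : Fin N) : ln (gen i) = 1 := rfl

/-- product of a word -/
def pr (l : List (Fin N)) : BM N := (l.map gen).prod

@[simp] theorem pr_nil : pr ([] : List (Fin N)) = 1 := rfl
@[simp] theorem pr_cons (a : Fin N) (l : List (Fin N)) : pr (a :: l) = gen a * pr l := by
  simp [pr]
@[simp] theorem pr_append (l l' : List (Fin N)) : pr (l ++ l') = pr l * pr l' := by
  simp [pr]

theorem mk_eq_pr (x : FreeMonoid (Fin N)) : PresentedMonoid.mk (MRel N) x = pr x.toList := by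
  induction x with
  | one => rfl
  | of x => simp [gen, PresentedMonoid.of]
  | mul x y hx hy => rw [map_mul, hx, hy]; simp

theorem pr_surj (x : BM N) : ∃ l, pr l = x := by
  obtain ⟨y, rfl⟩ := PresentedMonoid.surjective_mk x
  exact ⟨_, (mk_eq_pr y).symm⟩

theorem ln_pr (l : List (Fin N)) : ln (pr l) = l.length := by
  induction l with
  | nil => simp
  | cons a l ih => simp [ih, add_comm]

theorem bm_cases (x : BM N) : x = 1 ∨ ∃ i y, x = gen i * y := by
  obtain ⟨l, rfl⟩ := pr_surj x
  cases l with
  | nil => left; rfl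
  | cons a l => right; exact ⟨a, pr l, by simp⟩

theorem ln_eq_zero {x : BM N} (h : ln x = 0) : x = 1 := by
  rcases bm_cases x with h' | ⟨i, y, rfl⟩
  · exact h'
  · simp at h

/-- complement -/
noncomputable def C (i j : Fin N) : BM N :=
  if i = j then 1 else if adj i j then gen j * gen i else gen j

theorem C_self (i : Fin N) : C i i = 1 := by simp [C]
theorem C_adj {i j : Fin N} (h : adj i j) : C i j = gen j * gen i := by
  have : i ≠ j := by rintro rfl; unfold adj at h; omega
  simp [C, this, h]
theorem C_cm {i j : Fin N} (h : i ≠ j) (h' : ¬ adj i j) : C i j = gen j := by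
  simp [C, h, h']

theorem gen_C (i j : Fin N) : gen i * C i j = gen j * C j i := by
  by_cases h : i = j
  · rw [h]
  by_cases h' : adj i j
  · rw [C_adj h', C_adj (adj_symm h')]
    simpa using gen_br h' 1
  · rw [C_cm h h', C_cm (Ne.symm h) (fun h => h' (adj_symm h))]
    simpa using gen_cm h' 1

/-- Garside property for tails of length less than `k` -/
def HH (N k : ℕ) : Prop := ∀ (a b : Fin N) (u v : BM N), ln u < k → gen a * u = gen b * v →
  ∃ w, u = C a b * w ∧ v = C b a * w

theorem HH.eq {k : ℕ} (H : HH N k) {a : Fin N} {u v : BM N} (h : ln u < k)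
    (e : gen a * u = gen a * v) : u = v := by
  obtain ⟨w, h1, h2⟩ := H a a u v h e
  rw [h1, h2]

theorem HH.br {k : ℕ} (H : HH N k) {a b : Fin N} (hab : adj a b) {u v : BM N} (h : ln u < k)
    (e : gen a * u = gen b * v) : ∃ w, u = gen b * (gen a * w) ∧ v = gen a * (gen b * w) := by
  obtain ⟨w, h1, h2⟩ := H a b u v h e
  exact ⟨w, by rw [h1, C_adj hab, mul_assoc], by rw [h2, C_adj (adj_symm hab), mul_assoc]⟩

theorem HH.cm {k : ℕ} (H : HH N k) {a b : Fin N} (hne : a ≠ b) (hab : ¬ adj a b) {u v : BM N}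
    (h : ln u < k) (e : gen a * u = gen b * v) : ∃ w, u = gen b * w ∧ v = gen a * w := by
  obtain ⟨w, h1, h2⟩ := H a b u v h e
  exact ⟨w, by rw [h1, C_cm hne hab], by rw [h2, C_cm hne.symm (fun h => hab (adj_symm h))]⟩

theorem HH_trans {k : ℕ} (H : HH N k) (c d e : Fin N) (w w' : BM N)
    (hl : ln (C d c * w) ≤ k) (heq : C d c * w = C d e * w') :
    ∃ z, C c d * w = C c e * z ∧ C e d * w' = C e c * z := by
  have hl' : ln (C d e * w') ≤ k := heq ▸ hl
  by_cases hcd : c = d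
  · subst hcd
    rw [C_self, one_mul] at heq
    exact ⟨w', by rw [C_self, one_mul, heq], rfl⟩
  by_cases hde : d = e
  · subst hde
    rw [C_self, one_mul] at heq
    exact ⟨w, rfl, by rw [C_self, one_mul, heq]⟩
  by_cases hce : c = e
  · subst hce
    have : w = w' := by
      by_cases ha : adj d c
      · rw [C_adj ha] at heq hl
        simp only [mul_assoc, ln_mul, ln_gen] at heq hl
        have h1 := H.eq (by simp; omega) heq
        exact H.eq (by omega) h1
      · rw [C_cm (Ne.symm hcd) ha] at heq hl
        simp only [ln_mul, ln_gen] at heq hl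
        exact H.eq (by omega) heq
    subst this
    exact ⟨C c d * w, by rw [C_self, one_mul], by rw [C_self, one_mul]⟩
  have key3 : ∀ (c e : Fin N) (w w' : BM N), c ≠ d → d ≠ e → c ≠ e → adj c d → ¬ adj d e →
      ¬ adj c e → ln (C d c * w) ≤ k → C d c * w = C d e * w' →
      ∃ z, C c d * w = C c e * z ∧ C e d * w' = C e c * z := by
    intro c e w w' hcd hde hce acd ade ace hl heq
    have ade' : ¬ adj e d := fun h => ade (adj_symm h)
    have ace' : ¬ adj e c := fun h => ace (adj_symm h)
    rw [C_adj (adj_symm acd), C_cm hde ade] at heq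
    rw [C_adj (adj_symm acd)] at hl
    rw [C_adj acd, C_cm hce ace, C_cm hde.symm ade', C_cm hce.symm ace']
    simp only [mul_assoc, ln_mul, ln_gen] at heq hl ⊢
    obtain ⟨y, h1, rfl⟩ := H.cm hce ace (by simp; omega) heq
    obtain ⟨z, rfl, rfl⟩ := H.cm hde ade (by omega) h1
    refine ⟨gen d * (gen c * z), ?_, ?_⟩
    · rw [gen_cm ace, gen_cm ade]
    · rw [gen_br acd]
  have key5 : ∀ (c e : Fin N) (w w' : BM N), c ≠ d → d ≠ e → c ≠ e → adj c d → ¬ adj d e →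
      adj c e → ln (C d c * w) ≤ k → C d c * w = C d e * w' →
      ∃ z, C c d * w = C c e * z ∧ C e d * w' = C e c * z := by
    intro c e w w' hcd hde hce acd ade ace hl heq
    have ade' : ¬ adj e d := fun h => ade (adj_symm h)
    have ace' : adj e c := adj_symm ace
    have adc : adj d c := adj_symm acd
    rw [C_adj adc, C_cm hde ade] at heq
    rw [C_adj adc] at hl
    rw [C_adj acd, C_adj ace, C_cm hde.symm ade', C_adj ace']
    simp only [mul_assoc, ln_mul, ln_gen] at heq hl ⊢
    obtain ⟨y, h1, rfl⟩ := H.br ace (by simp; omega) heq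
    have hly : ln w = ln y + 1 := by
      have := congrArg ln h1; simp at this; omega
    obtain ⟨z, rfl, h2⟩ := H.cm hde ade (by omega) h1
    obtain ⟨q, rfl, rfl⟩ := H.br acd (by omega) h2
    refine ⟨gen d * (gen c * (gen e * q)), ?_, ?_⟩
    · rw [gen_br ace, gen_cm ade, gen_cm ade' q, gen_br adc]
    · rw [gen_cm ade', gen_br adc, gen_br ace, gen_cm ade]
  by_cases acd : adj c d
  · by_cases ade : adj d e
    · -- d in the middle
      have ace : ¬ adj c e := by
        unfold adj at *
        have : (c : ℕ) ≠ e := fun h => hce (Fin.ext h)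
        omega
      have adc : adj d c := adj_symm acd
      have aed : adj e d := adj_symm ade
      have ace' : ¬ adj e c := fun h => ace (adj_symm h)
      rw [C_adj adc, C_adj ade] at heq
      rw [C_adj adc] at hl
      rw [C_adj acd, C_cm hce ace, C_adj aed, C_cm (Ne.symm hce) ace']
      simp only [mul_assoc, ln_mul, ln_gen] at heq hl ⊢
      have hlw : ln w = ln w' := by
        have := congrArg ln heq; simp at this; omega
      obtain ⟨y, h1, h2⟩ := H.cm hce ace (by simp; omega) heq
      obtain ⟨z, rfl, rfl⟩ := H.br ade (by omega) h1
      obtain ⟨z', rfl, h3⟩ := H.br adc (by omega) h2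
      simp only [ln_mul, ln_gen] at hl hlw
      have h4 := H.eq (by simp; omega) h3
      obtain ⟨q, rfl, rfl⟩ := H.cm (Ne.symm hce) ace' (by omega) h4
      refine ⟨gen d * (gen e * (gen c * (gen d * q))), ?_, ?_⟩
      · rw [gen_cm ace, gen_br acd, gen_br ade]
      · rw [gen_cm ace', gen_br aed, gen_br adc, gen_cm ace]
    · by_cases ace : adj c e
      · exact key5 c e w w' hcd hde hce acd ade ace hl heq
      · exact key3 c e w w' hcd hde hce acd ade ace hl heq
  · have adc : ¬ adj d c := fun h => acd (adj_symm h)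
    by_cases ade : adj d e
    · have aed := adj_symm ade
      by_cases ace : adj c e
      · obtain ⟨z, h1, h2⟩ := key5 e c w' w (Ne.symm hde) (Ne.symm hcd) (Ne.symm hce) aed adc
          (adj_symm ace) hl' heq.symm
        exact ⟨z, h2, h1⟩
      · obtain ⟨z, h1, h2⟩ := key3 e c w' w (Ne.symm hde) (Ne.symm hcd) (Ne.symm hce) aed adc
          (fun h => ace (adj_symm h)) hl' heq.symm
        exact ⟨z, h2, h1⟩
    · have aed : ¬ adj e d := fun h => ade (adj_symm h)
      rw [C_cm (Ne.symm hcd) adc, C_cm hde ade] at heq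
      rw [C_cm (Ne.symm hcd) adc] at hl
      rw [C_cm hcd acd, C_cm (Ne.symm hde) aed]
      simp only [ln_mul, ln_gen] at hl
      by_cases ace : adj c e
      · rw [C_adj ace, C_adj (adj_symm ace)]
        obtain ⟨y, rfl, rfl⟩ := H.br ace (by omega) heq
        refine ⟨gen d * y, ?_, ?_⟩
        · simp only [mul_assoc]
          rw [gen_cm ade, gen_cm adc]
        · simp only [mul_assoc]
          rw [gen_cm adc, gen_cm ade]
      · rw [C_cm hce ace, C_cm (Ne.symm hce) (fun h => ace (adj_symm h))]
        obtain ⟨y, rfl, rfl⟩ := H.cm hce ace (by omega) heq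
        exact ⟨gen d * y, gen_cm ade _, gen_cm adc _⟩

/-- the word relation -/
def Rw : List (Fin N) → List (Fin N) → Prop
  | c :: u, d :: v => ∃ w, pr u = C c d * w ∧ pr v = C d c * w
  | [], [] => True
  | _, _ => False

theorem Rw_of_tail (c : Fin N) {u v : List (Fin N)} (h : pr u = pr v) : Rw (c :: u) (c :: v) :=
  ⟨pr u, by rw [C_self, one_mul], by rw [C_self, one_mul, h]⟩

theorem Rw_refl (l : List (Fin N)) : Rw l l := by
  cases l with
  | nil => trivial
  | cons c u => exact Rw_of_tail c rfl

theorem Rw_symm {l l' : List (Fin N)} (h : Rw l l') : Rw l' l := by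
  cases l <;> cases l' <;> first | exact h | (obtain ⟨w, h1, h2⟩ := h; exact ⟨w, h2, h1⟩)

theorem Rw_trans {k : ℕ} (H : HH N k) {l1 l2 l3 : List (Fin N)} (hl : l2.length ≤ k + 1)
    (h : Rw l1 l2) (h' : Rw l2 l3) : Rw l1 l3 := by
  cases l2 with
  | nil => cases l1 <;> cases l3 <;> simp_all [Rw]
  | cons d v =>
    cases l1 with
    | nil => exact h.elim
    | cons c u =>
      cases l3 with
      | nil => exact h'.elim
      | cons e z =>
        obtain ⟨w, h1, h2⟩ := h
        obtain ⟨w', h3, h4⟩ := h'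
        have hv := ln_pr v
        simp only [List.length_cons] at hl
        obtain ⟨y, h5, h6⟩ := HH_trans H c d e w w' (by rw [← h2]; omega) (h2.symm.trans h3)
        exact ⟨y, h1.trans h5, h4.trans h6⟩

theorem Rw_of_rel {k : ℕ} (H : HH N k) {x y : FreeMonoid (Fin N)} (h : ConGen.Rel (MRel N) x y) :
    ∀ X : List (Fin N), (x.toList ++ X).length ≤ k + 1 → Rw (x.toList ++ X) (y.toList ++ X) := by
  have len_eq : ∀ {x y : FreeMonoid (Fin N)}, ConGen.Rel (MRel N) x y →
      x.toList.length = y.toList.length := by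
    intro x y h
    have : PresentedMonoid.mk (MRel N) x = PresentedMonoid.mk (MRel N) y :=
      PresentedMonoid.mk_eq_mk_iff.2 h
    rw [mk_eq_pr, mk_eq_pr] at this
    rw [← ln_pr, this, ln_pr]
  induction h with
  | of x y h =>
    intro X _
    cases h with
    | br i j h =>
      have ha : adj i j := Or.inl h
      refine ⟨pr X, ?_, ?_⟩
      · rw [C_adj ha]; simp [mul_assoc]
      · rw [C_adj (adj_symm ha)]; simp [mul_assoc]
    | cm i j h =>
      have ha : ¬ adj i j := by unfold adj; omega
      have hne : i ≠ j := by rintro rfl; omega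
      refine ⟨pr X, ?_, ?_⟩
      · rw [C_cm hne ha]; simp
      · rw [C_cm hne.symm (fun h => ha (adj_symm h))]; simp
  | refl x => intro X _; exact Rw_refl _
  | symm h ih =>
    intro X hX
    have := len_eq h
    exact Rw_symm (ih X (by simp at hX ⊢; omega))
  | trans h1 h2 ih1 ih2 =>
    intro X hX
    have := len_eq h1
    have hX' := hX
    simp only [List.length_append] at hX'
    exact Rw_trans H (by simp; omega) (ih1 X hX) (ih2 X (by simp; omega))
  | @mul w x y z h1 h2 ih1 ih2 =>
    intro X hX
    have e1 := len_eq h1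
    have e2 := len_eq h2
    simp only [FreeMonoid.toList_mul, List.append_assoc] at hX ⊢
    have hX' := hX
    simp only [List.length_append] at hX'
    refine Rw_trans H ?_ (ih1 _ hX) (l3 := x.toList ++ (z.toList ++ X)) ?_
    · simp; omega
    · cases hx : x.toList with
      | nil => exact ih2 X (by simp; omega)
      | cons a l =>
        apply Rw_of_tail
        have : PresentedMonoid.mk (MRel N) y = PresentedMonoid.mk (MRel N) z :=
          PresentedMonoid.mk_eq_mk_iff.2 h2
        rw [mk_eq_pr, mk_eq_pr] at this
        simp only [List.append_eq, pr_append, this]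

theorem HH_all (k : ℕ) : HH N k := by
  induction k with
  | zero => intro a b u v h; omega
  | succ k ih =>
    intro a b u v h e
    obtain ⟨lu, rfl⟩ := pr_surj u
    obtain ⟨lv, rfl⟩ := pr_surj v
    have e' : PresentedMonoid.mk (MRel N) (FreeMonoid.ofList (a :: lu)) =
        PresentedMonoid.mk (MRel N) (FreeMonoid.ofList (b :: lv)) := by
      rw [mk_eq_pr, mk_eq_pr]; simpa using e
    have := Rw_of_rel ih (PresentedMonoid.mk_eq_mk_iff.1 e') [] (by
      rw [ln_pr] at h
      simp; omega)
    simpa [Rw] using this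

theorem garside (a b : Fin N) (u v : BM N) (e : gen a * u = gen b * v) :
    ∃ w, u = C a b * w ∧ v = C b a * w := HH_all (ln u + 1) a b u v (by omega) e

theorem gen_cancel (a : Fin N) {u v : BM N} (e : gen a * u = gen a * v) : u = v :=
  (HH_all (ln u + 1)).eq (by omega) e

theorem bm_cancel (x : BM N) {u v : BM N} (e : x * u = x * v) : u = v := by
  obtain ⟨l, rfl⟩ := pr_surj x
  induction l with
  | nil => simpa using e
  | cons a l ih => exact ih (gen_cancel a (by simpa [mul_assoc] using e))

/-- reversal -/
def brev : BM N →* (BM N)ᵐᵒᵖ :=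
  PresentedMonoid.lift (fun i => MulOpposite.op (gen i)) (by
    intro a b h
    cases h with
    | br i j h =>
      simp only [map_mul, FreeMonoid.lift_eval_of, ← MulOpposite.op_mul, ← mul_assoc]
      rw [gen_br' i j h]
    | cm i j h =>
      simp only [map_mul, FreeMonoid.lift_eval_of, ← MulOpposite.op_mul]
      rw [gen_cm' i j h])

theorem brev_gen (i : Fin N) : brev (gen i) = MulOpposite.op (gen i) := rfl

theorem brev_brev (x : BM N) : (brev (brev x).unop).unop = x := by
  obtain ⟨l, rfl⟩ := pr_surj x
  induction l with
  | nil => simp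
  | cons a l ih => simp [brev_gen, ih]

theorem bm_cancel_right (x : BM N) {u v : BM N} (e : u * x = v * x) : u = v := by
  have h : (brev x).unop * (brev u).unop = (brev x).unop * (brev v).unop := by
    rw [← MulOpposite.unop_mul, ← MulOpposite.unop_mul, ← map_mul, ← map_mul, e]
  have := bm_cancel _ h
  rw [← brev_brev u, this, brev_brev]

theorem bm_lcm : ∀ (k : ℕ) (P a b : BM N), ln P ≤ k → a ∣ P → b ∣ P →
    ∃ c, a ∣ c ∧ b ∣ c ∧ c ∣ P ∧ ∀ Q, a ∣ Q → b ∣ Q → c ∣ Q := by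
  intro k
  induction k with
  | zero =>
    rintro P a b h ⟨a', rfl⟩ hb
    simp only [ln_mul] at h
    have : a = 1 := ln_eq_zero (by omega)
    subst this
    exact ⟨b, one_dvd _, dvd_refl _, hb, fun Q _ h => h⟩
  | succ k ih =>
    intro P a b h ha hb
    rcases bm_cases a with rfl | ⟨i, a, rfl⟩
    · exact ⟨b, one_dvd _, dvd_refl _, hb, fun Q _ h => h⟩
    rcases bm_cases b with rfl | ⟨j, b, rfl⟩
    · exact ⟨_, dvd_refl _, one_dvd _, ha, fun Q h _ => h⟩
    obtain ⟨pa, rfl⟩ := ha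
    obtain ⟨pb, hb⟩ := hb
    rw [mul_assoc, mul_assoc] at hb
    simp only [mul_assoc, ln_mul, ln_gen] at h
    have hb' := congrArg ln hb
    simp only [ln_mul, ln_gen] at hb'
    obtain ⟨w, h1, h2⟩ := garside i j _ _ hb
    obtain ⟨u, hu1, hu2, hu3, hu4⟩ := ih (a * pa) a (C i j) (by simp; omega) (dvd_mul_right _ _)
      ⟨w, h1⟩
    obtain ⟨r, hr⟩ := hu2
    have hv : gen i * u = gen j * (C j i * r) := by
      rw [hr, ← mul_assoc, gen_C, mul_assoc]
    have hu3' : gen j * (C j i * r) ∣ gen j * (b * pb) := by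
      rw [← hv, ← hb]; exact mul_dvd_mul_left _ hu3
    have canc : ∀ {l : Fin N} {x y : BM N}, gen l * x ∣ gen l * y → x ∣ y := by
      rintro l x y ⟨z, hz⟩
      exact ⟨z, gen_cancel l (by rw [hz, mul_assoc])⟩
    obtain ⟨c, hc1, hc2, hc3, hc4⟩ := ih (b * pb) (C j i * r) b (by simp; omega) (canc hu3')
      (dvd_mul_right _ _)
    refine ⟨gen j * c, ?_, mul_dvd_mul_left _ hc2, ?_, ?_⟩
    · refine dvd_trans ?_ (mul_dvd_mul_left _ hc1)
      rw [← hv]; exact mul_dvd_mul_left _ hu1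
    · rw [mul_assoc, hb]; exact mul_dvd_mul_left _ hc3
    · rintro Q ⟨q1, e1⟩ ⟨q2, e2⟩
      rw [mul_assoc] at e1 e2
      obtain ⟨w', h1', h2'⟩ := garside i j _ _ (e1.symm.trans e2)
      have : u ∣ a * q1 := hu4 _ (dvd_mul_right _ _) ⟨w', h1'⟩
      have : gen j * (C j i * r) ∣ gen j * (b * q2) := by
        rw [← hv, ← e2, e1]; exact mul_dvd_mul_left _ this
      rw [e2]
      exact mul_dvd_mul_left _ (hc4 _ (canc this) (dvd_mul_right _ _))

theorem bm_gcd (P Q : BM N) : ∃ d, d ∣ P ∧ d ∣ Q ∧ ∀ e, e ∣ P → e ∣ Q → e ∣ d := by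
  have key : ∀ m : ℕ, ∀ d : BM N, d ∣ P → d ∣ Q → ln P - ln d ≤ m →
      ∃ d, d ∣ P ∧ d ∣ Q ∧ ∀ e, e ∣ P → e ∣ Q → e ∣ d := by
    intro m
    induction m with
    | zero =>
      rintro d ⟨p, rfl⟩ h2 h
      simp only [ln_mul] at h
      have : p = 1 := ln_eq_zero (by omega)
      subst this
      exact ⟨d, dvd_mul_right _ _, h2, fun e he _ => by simpa using he⟩
    | succ m ih =>
      intro d h1 h2 h
      by_cases hd : ∀ e, e ∣ P → e ∣ Q → e ∣ d
      · exact ⟨d, h1, h2, hd⟩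
      · push Not at hd
        obtain ⟨e, he1, he2, he3⟩ := hd
        obtain ⟨c, ⟨f, rfl⟩, hc2, hc3, hc4⟩ := bm_lcm (ln P) P d e le_rfl h1 he1
        refine ih (d * f) hc3 (hc4 Q h2 he2) ?_
        have : ln f ≠ 0 := by
          intro h0
          rw [ln_eq_zero h0, mul_one] at hc2
          exact he3 hc2
        simp only [ln_mul]
        omega
  exact key _ 1 (one_dvd _) (one_dvd _) le_rfl

end Monoid

section DeltaAbs

variable {G : Type*} [Monoid G]

/-- descending block `s k ⋯ s 0` -/
def Bk (s : ℕ → G) : ℕ → G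
  | 0 => s 0
  | k + 1 => s (k + 1) * Bk s k

/-- ascending block `s 0 ⋯ s k` -/
def Ak (s : ℕ → G) : ℕ → G
  | 0 => s 0
  | k + 1 => Ak s k * s (k + 1)

/-- the half twist on the first `k` generators -/
def Dk (s : ℕ → G) : ℕ → G
  | 0 => 1
  | k + 1 => Dk s k * Bk s k

theorem Bk_list (s : ℕ → G) (k : ℕ) : Bk s k = ((List.range (k + 1)).reverse.map s).prod := by
  induction k with
  | zero => simp [Bk]
  | succ k ih => rw [Bk, ih, List.range_succ (n := k + 1)]; simp

theorem Dk_list (s : ℕ → G) (k : ℕ) : Dk s k =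
    ((((List.range k).map fun k => (List.range (k + 1)).reverse).flatten).map s).prod := by
  induction k with
  | zero => simp [Dk]
  | succ k ih =>
    rw [Dk, ih, Bk_list, List.range_succ (n := k)]
    simp only [List.map_append, List.flatten_append, List.prod_append, List.map_cons, List.map_nil,
      List.flatten_cons, List.flatten_nil, List.append_nil]
    rw [List.range_succ (n := k)]

/-- braid relations in range `< N` -/
structure BrS (s : ℕ → G) (N : ℕ) : Prop where
  br : ∀ i, i + 1 < N → s i * s (i + 1) * s i = s (i + 1) * s i * s (i + 1)
  cm : ∀ i j, i + 2 ≤ j → j < N → s i * s j = s j * s i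

variable {s : ℕ → G} {N : ℕ}

theorem BrS.cmB (h : BrS s N) {k j : ℕ} (hk : k + 2 ≤ j) (hj : j < N) :
    Bk s k * s j = s j * Bk s k := by
  induction k with
  | zero => exact h.cm _ _ hk hj
  | succ k ih => rw [Bk, mul_assoc, ih (by omega), ← mul_assoc, h.cm _ _ hk hj, mul_assoc]

theorem BrS.cmA (h : BrS s N) {k j : ℕ} (hk : k + 2 ≤ j) (hj : j < N) :
    Ak s k * s j = s j * Ak s k := by
  induction k with
  | zero => exact h.cm _ _ hk hj
  | succ k ih => rw [Ak, mul_assoc, h.cm _ _ hk hj, ← mul_assoc, ih (by omega), mul_assoc]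

theorem BrS.cmD (h : BrS s N) {k j : ℕ} (hk : k + 1 ≤ j) (hj : j < N) :
    Dk s k * s j = s j * Dk s k := by
  induction k with
  | zero => simp [Dk]
  | succ k ih => rw [Dk, mul_assoc, h.cmB hk hj, ← mul_assoc, ih (by omega), mul_assoc]

theorem BrS.shB (h : BrS s N) {k i : ℕ} (hi : i + 1 ≤ k) (hk : k < N) :
    Bk s k * s (i + 1) = s i * Bk s k := by
  induction k with
  | zero => omega
  | succ k ih =>
    rcases Nat.lt_or_ge i k with h' | h'
    · rw [Bk, mul_assoc, ih (by omega) (by omega), ← mul_assoc, ← h.cm i (k+1) (by omega) hk,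
        mul_assoc]
    · have : i = k := by omega
      subst this
      cases i with
      | zero =>
        have := h.br 0 hk
        simpa [Bk, mul_assoc] using this.symm
      | succ i =>
        rw [Bk, Bk]
        have e := h.cmB (k := i) (j := i + 1 + 1) (by omega) hk
        have e2 := h.br (i + 1) hk
        calc s (i + 1 + 1) * (s (i + 1) * Bk s i) * s (i + 1 + 1)
            = s (i + 1 + 1) * s (i + 1) * (Bk s i * s (i + 1 + 1)) := by simp only [mul_assoc]
          _ = s (i + 1 + 1) * s (i + 1) * s (i + 1 + 1) * Bk s i := by rw [e]; simp only [mul_assoc]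
          _ = _ := by rw [← e2]; simp only [mul_assoc]

theorem BrS.shA (h : BrS s N) {k i : ℕ} (hi : i + 1 ≤ k) (hk : k < N) :
    Ak s k * s i = s (i + 1) * Ak s k := by
  induction k with
  | zero => omega
  | succ k ih =>
    rcases Nat.lt_or_ge i k with h' | h'
    · rw [Ak, mul_assoc, ← h.cm i (k+1) (by omega) hk, ← mul_assoc, ih (by omega) (by omega),
        mul_assoc]
    · have : i = k := by omega
      subst this
      cases i with
      | zero =>
        have := h.br 0 hk
        simpa [Ak, mul_assoc] using this
      | succ i =>
        rw [Ak, Ak]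
        have e := h.cmA (k := i) (j := i + 1 + 1) (by omega) hk
        have e2 := h.br (i + 1) hk
        calc Ak s i * s (i + 1) * s (i + 1 + 1) * s (i + 1)
            = Ak s i * (s (i + 1) * s (i + 1 + 1) * s (i + 1)) := by simp only [mul_assoc]
          _ = Ak s i * s (i + 1 + 1) * s (i + 1) * s (i + 1 + 1) := by
            rw [e2]; simp only [mul_assoc]
          _ = _ := by rw [e]; simp only [mul_assoc]

theorem BrS.DA (h : BrS s N) {k : ℕ} (hk : k < N) : Dk s (k + 1) = Ak s k * Dk s k := by
  induction k with
  | zero => simp [Dk, Ak, Bk]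
  | succ k ih =>
    rw [Dk, ih (by omega), Bk, Ak]
    calc Ak s k * Dk s k * (s (k + 1) * Bk s k) = Ak s k * (Dk s k * s (k + 1)) * Bk s k := by
          simp only [mul_assoc]
      _ = Ak s k * s (k + 1) * (Dk s k * Bk s k) := by
          rw [h.cmD (by omega) hk]; simp only [mul_assoc]
      _ = _ := by rw [← ih (by omega), Dk]

theorem BrS.Dflip (h : BrS s N) {k i : ℕ} (hi : i < k) (hk : k ≤ N) :
    Dk s k * s i = s (k - 1 - i) * Dk s k := by
  induction k generalizing i with
  | zero => omega
  | succ k ih =>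
    cases i with
    | succ i =>
      rw [Dk, mul_assoc, h.shB (by omega) (by omega), ← mul_assoc, ih (by omega) (by omega),
        mul_assoc]
      congr 2
      omega
    | zero =>
      cases k with
      | zero => simp [Dk, Bk]
      | succ k =>
        rw [h.DA (by omega), mul_assoc, ih (by omega) (by omega), ← mul_assoc,
          h.shA (by omega) (by omega), mul_assoc]
        congr 2

theorem Ak_head (s : ℕ → G) (k : ℕ) : ∃ z, Ak s k = s 0 * z := by
  induction k with
  | zero => exact ⟨1, by simp [Ak]⟩
  | succ k ih => obtain ⟨z, hz⟩ := ih; exact ⟨z * s (k + 1), by rw [Ak, hz, mul_assoc]⟩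

theorem BrS.Dright (h : BrS s N) (hc : ∀ a b c : G, a * b = a * c → b = c) {k i : ℕ} (hi : i < k)
    (hk : k ≤ N) : ∃ z, Dk s k = z * s i := by
  induction k with
  | zero => omega
  | succ k ih =>
    rcases Nat.lt_or_ge i k with h' | h'
    · obtain ⟨z, hz⟩ := ih h' (by omega)
      exact ⟨Ak s k * z, by rw [h.DA (by omega), hz, mul_assoc]⟩
    · have : i = k := by omega
      subst this
      obtain ⟨z, hz⟩ := Ak_head s i
      refine ⟨z * Dk s i, hc (s 0) _ _ ?_⟩
      have e := h.Dflip hi hk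
      have e0 : i + 1 - 1 - i = 0 := by omega
      rw [e0] at e
      rw [← e, h.DA (by omega), hz]
      simp only [mul_assoc]

end DeltaAbs

section Embed

/-- total generator function of the monoid -/
def gen' (N : ℕ) (i : ℕ) : BM N := if h : i < N then gen ⟨i, h⟩ else 1

theorem gen'_fin {N : ℕ} (i : Fin N) : gen' N i = gen i := by simp [gen']

theorem gen'_BrS (N : ℕ) : BrS (gen' N) N where
  br i hi := by
    rw [gen', gen', dif_pos hi, dif_pos (by omega)]
    exact gen_br' _ _ rfl
  cm i j hi hj := by
    rw [gen', gen', dif_pos hj, dif_pos (by omega)]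
    exact gen_cm' _ _ hi

theorem bm_delta_pow (N : ℕ) (k : ℕ) (i : Fin N) :
    ∃ j : Fin N, Dk (gen' N) N ^ k * gen i = gen j * Dk (gen' N) N ^ k := by
  induction k generalizing i with
  | zero => exact ⟨i, by simp⟩
  | succ k ih =>
    have h1 := (gen'_BrS N).Dflip i.2 le_rfl
    obtain ⟨j, hj⟩ := ih ⟨N - 1 - i, by omega⟩
    refine ⟨j, ?_⟩
    rw [← gen'_fin i, pow_succ, mul_assoc, h1, ← mul_assoc, ← mul_assoc, ← hj, ← gen'_fin]

theorem bm_right_dvd (N : ℕ) (l : List (Fin N)) :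
    ∃ z, z * pr l = Dk (gen' N) N ^ l.length := by
  induction l using List.reverseRecOn with
  | nil => exact ⟨1, by simp⟩
  | append_singleton l i ih =>
    obtain ⟨z, hz⟩ := ih
    obtain ⟨j, hj⟩ := bm_delta_pow N l.length i
    obtain ⟨y, hy⟩ := (gen'_BrS N).Dright (fun a b c h => bm_cancel a h) j.2 le_rfl
    rw [gen'_fin] at hy
    refine ⟨y * z, ?_⟩
    simp only [pr_append, pr_cons, pr_nil, mul_one, List.length_append, List.length_singleton]
    rw [mul_assoc, ← mul_assoc z, hz, hj, ← mul_assoc, ← hy, pow_succ']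

theorem bm_ore (N : ℕ) (r s : BM N) : ∃ a b : BM N, a * r = b * s := by
  obtain ⟨l, rfl⟩ := pr_surj r
  obtain ⟨m, rfl⟩ := pr_surj s
  obtain ⟨y, hy⟩ := bm_right_dvd N l
  obtain ⟨z, hz⟩ := bm_right_dvd N m
  refine ⟨Dk (gen' N) N ^ m.length * y, Dk (gen' N) N ^ l.length * z, ?_⟩
  rw [mul_assoc, mul_assoc, hy, hz, ← pow_add, ← pow_add, add_comm]

/-- Ore structure on the whole monoid -/
@[reducible] noncomputable def oreTop (N : ℕ) : OreLocalization.OreSet (⊤ : Submonoid (BM N)) where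
  ore_right_cancel r₁ r₂ s h := ⟨1, by rw [bm_cancel_right _ h]⟩
  oreNum r s := (bm_ore N r s).choose_spec.choose
  oreDenom r s := ⟨(bm_ore N r s).choose, trivial⟩
  ore_eq r s := (bm_ore N r s).choose_spec.choose_spec

variable (n : ℕ)

/-- the canonical map to the group -/
def φ : BM (n - 1) →* Braid n :=
  PresentedMonoid.lift (fun i => σ i) (by
    intro a b h
    cases h with
    | br i j h =>
      simp only [map_mul, FreeMonoid.lift_eval_of]
      rw [← mul_inv_eq_one]
      exact PresentedGroup.one_of_mem (rels := braidRels n) (Or.inl ⟨i, j, h, rfl⟩)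
    | cm i j h =>
      simp only [map_mul, FreeMonoid.lift_eval_of]
      rw [← mul_inv_eq_one]
      exact PresentedGroup.one_of_mem (rels := braidRels n) (Or.inr ⟨i, j, h, rfl⟩))

@[simp] theorem φ_gen (i : Fin (n - 1)) : φ n (gen i) = σ i := rfl

theorem φ_inj : Function.Injective (φ n) := by
  let _ := oreTop (n - 1)
  let u : BM (n - 1) → (OreLocalization (⊤ : Submonoid (BM (n - 1))) (BM (n - 1)))ˣ :=
    fun x => OreLocalization.numeratorUnit ⟨x, trivial⟩
  have hu : ∀ x, (u x : OreLocalization (⊤ : Submonoid (BM (n - 1))) (BM (n - 1))) =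
    OreLocalization.numeratorHom x := fun x => rfl
  have hmul : ∀ x y, u (x * y) = u x * u y := by
    intro x y
    ext
    rw [Units.val_mul, hu, hu, hu, map_mul]
  have hone : u 1 = 1 := by ext; rw [hu, map_one]; rfl
  let ψ : Braid n →* (OreLocalization (⊤ : Submonoid (BM (n - 1))) (BM (n - 1)))ˣ :=
    PresentedGroup.toGroup (f := fun i => u (gen i)) (by
      rintro r (⟨i, j, h, rfl⟩ | ⟨i, j, h, rfl⟩)
      · simp only [map_mul, map_inv, FreeGroup.lift_apply_of, ← hmul]
        rw [gen_br' i j h]; group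
      · simp only [map_mul, map_inv, FreeGroup.lift_apply_of, ← hmul]
        rw [gen_cm' i j h]; group)
  have hψ : ∀ x, ψ (φ n x) = u x := by
    intro x
    obtain ⟨l, rfl⟩ := pr_surj x
    induction l with
    | nil => simp [hone]
    | cons a l ih =>
      rw [pr_cons, map_mul, map_mul, ih, hmul]
      congr 1
      exact PresentedGroup.toGroup.of _
  have uinj : ∀ x y, u x = u y → x = y := by
    intro x y h
    have h := congrArg Units.val h
    rw [hu, hu, OreLocalization.numeratorHom_apply, OreLocalization.numeratorHom_apply,
      OreLocalization.oreDiv_eq_iff] at h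
    obtain ⟨a, b, h1, h2⟩ := h
    simp only [Submonoid.coe_one, mul_one] at h2
    rw [← h2] at h1
    exact (bm_cancel _ h1).symm
  intro x y h
  exact uinj x y (by rw [← hψ, ← hψ, h])

theorem Pos_eq : Pos n = MonoidHom.mrange (φ n) := by
  apply le_antisymm
  · rw [Pos, Submonoid.closure_le]
    rintro _ ⟨i, rfl⟩
    exact ⟨gen i, rfl⟩
  · rintro _ ⟨x, rfl⟩
    obtain ⟨l, rfl⟩ := pr_surj x
    induction l with
    | nil => simp
    | cons a l ih =>
      rw [pr_cons, map_mul]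
      exact mul_mem (Submonoid.subset_closure ⟨a, rfl⟩) ih

end Embed

section Order

variable {n : ℕ}

/-- exponent sum -/
def expo : Braid n →* Multiplicative ℤ :=
  PresentedGroup.toGroup (f := fun _ => Multiplicative.ofAdd 1) (by
    rintro r (⟨i, j, h, rfl⟩ | ⟨i, j, h, rfl⟩) <;>
    simp [map_mul, map_inv, FreeGroup.lift_apply_of])

/-- exponent sum as an integer -/
def ex (x : Braid n) : ℤ := (expo x).toAdd

@[simp] theorem ex_mul (x y : Braid n) : ex (x * y) = ex x + ex y := by simp [ex]
@[simp] theorem ex_inv (x : Braid n) : ex x⁻¹ = - ex x := by simp [ex]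
@[simp] theorem ex_one : ex (1 : Braid n) = 0 := by simp [ex]
@[simp] theorem ex_σ (i : Fin (n - 1)) : ex (σ i : Braid n) = 1 := by
  unfold ex expo σ
  rw [PresentedGroup.toGroup.of]; rfl
@[simp] theorem ex_zpow (x : Braid n) (k : ℤ) : ex (x ^ k) = k * ex x := by
  simp [ex, map_zpow]

theorem pos_iff {x : Braid n} : x ∈ Pos n ↔ ∃ m, φ n m = x := by
  rw [Pos_eq]; exact MonoidHom.mem_mrange

theorem ex_φ (m : BM (n - 1)) : ex (φ n m) = ln m := by
  obtain ⟨l, rfl⟩ := pr_surj m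
  induction l with
  | nil => simp
  | cons a l ih => simp [ih]

theorem ex_nonneg {x : Braid n} (h : x ∈ Pos n) : 0 ≤ ex x := by
  obtain ⟨m, rfl⟩ := pos_iff.1 h
  rw [ex_φ]; omega

theorem ex_pos {x : Braid n} (h : x ∈ Pos n) (h1 : x ≠ 1) : 1 ≤ ex x := by
  obtain ⟨m, rfl⟩ := pos_iff.1 h
  rw [ex_φ]
  by_contra hc
  exact h1 (by rw [ln_eq_zero (by omega : ln m = 0), map_one])

theorem σ_pos (i : Fin (n - 1)) : (σ i : Braid n) ∈ Pos n := Submonoid.subset_closure ⟨i, rfl⟩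

theorem pos_cases {x : Braid n} (h : x ∈ Pos n) : x = 1 ∨ ∃ i, PrefixLE (σ i) x := by
  obtain ⟨m, rfl⟩ := pos_iff.1 h
  rcases bm_cases m with rfl | ⟨i, y, rfl⟩
  · left; simp
  · right; refine ⟨i, ?_⟩
    unfold PrefixLE
    rw [map_mul, φ_gen, inv_mul_cancel_left]
    exact pos_iff.2 ⟨y, rfl⟩

theorem ple_refl (x : Braid n) : PrefixLE x x := by simp [PrefixLE]
theorem ple_trans {x y z : Braid n} (h : PrefixLE x y) (h' : PrefixLE y z) : PrefixLE x z := by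
  unfold PrefixLE at *
  have := mul_mem h h'
  simpa [mul_assoc] using this
theorem ple_antisymm {x y : Braid n} (h : PrefixLE x y) (h' : PrefixLE y x) : x = y := by
  unfold PrefixLE at *
  by_contra hne
  have h1 : x⁻¹ * y ≠ 1 := by
    intro h; exact hne (inv_mul_eq_one.1 h)
  have := ex_pos h h1
  have := ex_nonneg h'
  simp at *
  omega
theorem one_ple {x : Braid n} : PrefixLE 1 x ↔ x ∈ Pos n := by simp [PrefixLE]
theorem ple_mul {x p : Braid n} (h : p ∈ Pos n) : PrefixLE x (x * p) := by
  simpa [PrefixLE] using h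
theorem mul_ple {a x y : Braid n} : PrefixLE (a * x) (a * y) ↔ PrefixLE x y := by
  simp [PrefixLE, mul_assoc]
theorem mul_ple' {a x y : Braid n} : PrefixLE (a * x) y ↔ PrefixLE x (a⁻¹ * y) := by
  rw [← mul_ple (a := a) (y := a⁻¹ * y)]; simp
theorem eq_one_of_ple {x : Braid n} (h : x ∈ Pos n) (h' : PrefixLE x 1) : x = 1 :=
  ple_antisymm h' (one_ple.2 h)

theorem Δ_eq : Δ n = Dk (σ' n) (n - 1) := by rw [Dk_list]; rfl

theorem φ_Dk : φ n (Dk (gen' (n - 1)) (n - 1)) = Δ n := by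
  rw [Dk_list, map_list_prod, List.map_map]
  unfold Δ
  congr 2
  ext i
  simp only [Function.comp, gen', σ']
  split <;> simp

theorem Δ_pos : Δ n ∈ Pos n := pos_iff.2 ⟨_, φ_Dk⟩

theorem Δ_σ (i : Fin (n - 1)) : ∃ j : Fin (n - 1), Δ n * σ i = σ j * Δ n := by
  obtain ⟨j, hj⟩ := bm_delta_pow (n - 1) 1 i
  refine ⟨j, ?_⟩
  have := congrArg (φ n) hj
  simpa [φ_Dk] using this

theorem Δ_σ' (i : Fin (n - 1)) : ∃ j : Fin (n - 1), σ i * Δ n = Δ n * σ j := by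
  have h1 := (gen'_BrS (n - 1)).Dflip (i := n - 1 - 1 - i) (by omega) le_rfl
  have h2 : n - 1 - 1 - (n - 1 - 1 - (i : ℕ)) = i := by omega
  rw [h2, gen'_fin] at h1
  have h3 := gen'_fin (⟨n - 1 - 1 - i, by omega⟩ : Fin (n - 1))
  simp only at h3
  rw [h3] at h1
  refine ⟨⟨n - 1 - 1 - i, by omega⟩, ?_⟩
  have := congrArg (φ n) h1
  simpa [φ_Dk] using this.symm

theorem conj_pos {x : Braid n} (h : x ∈ Pos n) : Δ n * x * (Δ n)⁻¹ ∈ Pos n := by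
  induction h using Submonoid.closure_induction with
  | mem x h =>
    obtain ⟨i, rfl⟩ := h
    obtain ⟨j, hj⟩ := Δ_σ i
    rw [hj, mul_inv_cancel_right]; exact σ_pos j
  | one => simp
  | mul x y _ _ hx hy =>
    have := mul_mem hx hy
    simpa [mul_assoc] using this

theorem conj_pos' {x : Braid n} (h : x ∈ Pos n) : (Δ n)⁻¹ * x * Δ n ∈ Pos n := by
  induction h using Submonoid.closure_induction with
  | mem x h =>
    obtain ⟨i, rfl⟩ := h
    obtain ⟨j, hj⟩ := Δ_σ' i
    rw [mul_assoc, hj, inv_mul_cancel_left]; exact σ_pos j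
  | one => simp
  | mul x y _ _ hx hy =>
    have := mul_mem hx hy
    simpa [mul_assoc] using this

theorem conj_zpow {x : Braid n} (h : x ∈ Pos n) (k : ℤ) : Δ n ^ k * x * (Δ n ^ k)⁻¹ ∈ Pos n := by
  induction k using Int.induction_on with
  | zero => simpa using h
  | succ k ih =>
    have := conj_pos ih
    rw [zpow_add, zpow_one]
    convert this using 1
    have : Δ n ^ (k : ℤ) * Δ n = Δ n * Δ n ^ (k : ℤ) := by rw [← zpow_add_one, ← zpow_one_add, add_comm]
    rw [this]; group
  | pred k ih =>
    have := conj_pos' ih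
    convert this using 1
    rw [zpow_sub_one, (Commute.refl (Δ n)).zpow_left (-(k:ℤ)) |>.inv_right |>.eq]
    group

theorem conj_zpow' {x : Braid n} (h : x ∈ Pos n) (k : ℤ) : (Δ n ^ k)⁻¹ * x * Δ n ^ k ∈ Pos n := by
  have := conj_zpow h (-k)
  simpa using this

theorem conj_zpow_iff {x : Braid n} {k : ℤ} : (Δ n ^ k)⁻¹ * x * Δ n ^ k ∈ Pos n ↔ x ∈ Pos n := by
  refine ⟨fun h => ?_, fun h => conj_zpow' h k⟩
  have := conj_zpow h k
  simpa [mul_assoc] using this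

/-- right multiplication by powers of `Δ` preserves order -/
theorem ple_mul_right {x y : Braid n} (k : ℤ) :
    PrefixLE (x * Δ n ^ k) (y * Δ n ^ k) ↔ PrefixLE x y := by
  unfold PrefixLE
  rw [← conj_zpow_iff (x := x⁻¹ * y) (k := k)]
  simp [mul_assoc]

theorem ple_mul_right' {x y : Braid n} (k : ℤ) :
    PrefixLE (x * Δ n ^ k) y ↔ PrefixLE x (y * Δ n ^ (-k)) := by
  rw [← ple_mul_right (y := y * Δ n ^ (-k)) k, mul_assoc, ← zpow_add]
  simp

theorem zpow_ple_iff {x : Braid n} {k : ℤ} : PrefixLE (Δ n ^ k) x ↔ x * Δ n ^ (-k) ∈ Pos n := by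
  have := ple_mul_right' (x := 1) (y := x) k
  rw [one_mul, one_ple] at this
  exact this

theorem Δ_zpow_pos {k : ℤ} (hk : 0 ≤ k) : Δ n ^ k ∈ Pos n := by
  obtain ⟨m, rfl⟩ := Int.eq_ofNat_of_zero_le hk
  rw [zpow_natCast]; exact pow_mem Δ_pos m

theorem Δ_zpow_mono {k m : ℤ} (h : k ≤ m) : PrefixLE (Δ n ^ k) (Δ n ^ m) := by
  rw [zpow_ple_iff, ← zpow_add]
  exact Δ_zpow_pos (by omega)

theorem zpow_ple_mul {x p : Braid n} {k : ℤ} (h : PrefixLE (Δ n ^ k) x) (hp : p ∈ Pos n) :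
    PrefixLE (Δ n ^ k) (p * x) := by
  rw [zpow_ple_iff] at *
  rw [mul_assoc]; exact mul_mem hp h

theorem zpow_ple_mul2 {x y : Braid n} {k m : ℤ} (h : PrefixLE (Δ n ^ k) x)
    (h' : PrefixLE (Δ n ^ m) y) : PrefixLE (Δ n ^ (k + m)) (x * y) := by
  rw [zpow_add]
  refine ple_trans (y := x * Δ n ^ m) ?_ (mul_ple.2 h')
  exact (ple_mul_right m).2 h

theorem σ_ple_Δ (i : Fin (n - 1)) : PrefixLE (σ i) (Δ n) := by
  obtain ⟨j, hj⟩ := Δ_σ' i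
  obtain ⟨z, hz⟩ := (gen'_BrS (n - 1)).Dright (fun a b c h => bm_cancel a h) j.2 le_rfl
  have h2 := congrArg (φ n) hz
  rw [gen'_fin, map_mul, φ_Dk, φ_gen] at h2
  have : (σ i)⁻¹ * Δ n = φ n z := by
    have e : (σ i)⁻¹ * Δ n = Δ n * (σ j)⁻¹ := by
      rw [inv_mul_eq_iff_eq_mul, ← mul_assoc, hj, mul_inv_cancel_right]
    rw [e, h2, mul_inv_cancel_right]
  unfold PrefixLE
  rw [this]; exact pos_iff.2 ⟨z, rfl⟩

theorem exists_pow (x : Braid n) : ∃ k : ℕ, Δ n ^ k * x ∈ Pos n := by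
  have key : ∃ k : ℤ, 0 ≤ k ∧ Δ n ^ k * x ∈ Pos n := by
    obtain ⟨w, rfl⟩ := PresentedGroup.mk_surjective (braidRels n) x
    have gp : ∀ {k m : ℤ} {x : Braid n}, k ≤ m → Δ n ^ k * x ∈ Pos n → Δ n ^ m * x ∈ Pos n := by
      intro k m x h h'
      have : Δ n ^ m * x = Δ n ^ (m - k) * (Δ n ^ k * x) := by
        rw [← mul_assoc, ← zpow_add]; congr 2; ring
      rw [this]
      exact mul_mem (Δ_zpow_pos (by omega)) h'
    induction w using FreeGroup.induction_on with
    | C1 => exact ⟨0, le_rfl, by simp⟩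
    | of i => exact ⟨0, le_rfl, by rw [zpow_zero, one_mul]; exact σ_pos i⟩
    | inv_of i _ =>
      refine ⟨1, by omega, ?_⟩
      have := conj_pos (σ_ple_Δ i)
      rw [map_inv, zpow_one]
      show Δ n * (σ i)⁻¹ ∈ Pos n
      simpa [mul_assoc] using this
    | mul a b ha hb =>
      obtain ⟨k, hk, ha⟩ := ha
      obtain ⟨m, hm, hb⟩ := hb
      refine ⟨m + k, by omega, ?_⟩
      rw [map_mul, zpow_add]
      have := mul_mem (conj_zpow ha m) hb
      simpa [mul_assoc] using this
  obtain ⟨k, hk, h⟩ := key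
  obtain ⟨m, rfl⟩ := Int.eq_ofNat_of_zero_le hk
  exact ⟨m, by simpa using h⟩

theorem dvd_iff {a b : BM (n - 1)} : PrefixLE (φ n a) (φ n b) ↔ a ∣ b := by
  constructor
  · intro h
    obtain ⟨c, hc⟩ := pos_iff.1 h
    refine ⟨c, φ_inj n ?_⟩
    rw [map_mul, hc, mul_inv_cancel_left]
  · rintro ⟨c, rfl⟩
    rw [map_mul]; exact ple_mul (pos_iff.2 ⟨c, rfl⟩)

theorem exists_meet (x y : Braid n) :
    ∃ m, PrefixLE m x ∧ PrefixLE m y ∧ ∀ t, PrefixLE t x → PrefixLE t y → PrefixLE t m := by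
  obtain ⟨k1, h1⟩ := exists_pow x
  obtain ⟨k2, h2⟩ := exists_pow y
  have h1' : Δ n ^ (k1 + k2) * x ∈ Pos n := by
    rw [add_comm, pow_add, mul_assoc]; exact mul_mem (pow_mem Δ_pos _) h1
  have h2' : Δ n ^ (k1 + k2) * y ∈ Pos n := by
    rw [pow_add, mul_assoc]; exact mul_mem (pow_mem Δ_pos _) h2
  obtain ⟨a, ha⟩ := pos_iff.1 h1'
  obtain ⟨b, hb⟩ := pos_iff.1 h2'
  obtain ⟨d, hd1, hd2, hd3⟩ := bm_gcd a b
  refine ⟨(Δ n ^ (k1 + k2))⁻¹ * φ n d, ?_, ?_, ?_⟩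
  · rw [mul_ple', inv_inv, ← ha]; exact dvd_iff.2 hd1
  · rw [mul_ple', inv_inv, ← hb]; exact dvd_iff.2 hd2
  · intro t ht1 ht2
    rw [← mul_ple (a := Δ n ^ (k1 + k2)), mul_inv_cancel_left]
    rw [← mul_ple (a := Δ n ^ (k1 + k2)), ← ha] at ht1
    rw [← mul_ple (a := Δ n ^ (k1 + k2)), ← hb] at ht2
    generalize Δ n ^ (k1 + k2) * t = t at *
    obtain ⟨k, hk⟩ := exists_pow t
    obtain ⟨c, hc⟩ := pos_iff.1 hk
    have hz : φ n (Dk (gen' (n - 1)) (n - 1) ^ k) = Δ n ^ k := by rw [map_pow, φ_Dk]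
    generalize Dk (gen' (n - 1)) (n - 1) ^ k = z at *
    rw [← mul_ple (a := Δ n ^ k), ← hc, ← hz, ← map_mul, dvd_iff] at ht1 ht2 ⊢
    obtain ⟨e, he1, he2, he3⟩ := bm_gcd (z * a) (z * b)
    obtain ⟨f, rfl⟩ := he3 z (dvd_mul_right _ _) (dvd_mul_right _ _)
    have canc : ∀ {x y : BM (n - 1)}, z * x ∣ z * y → x ∣ y := by
      rintro x y ⟨w, hw⟩
      exact ⟨w, bm_cancel z (by rw [hw, mul_assoc])⟩
    exact dvd_trans (he3 c ht1 ht2) (mul_dvd_mul_left _ (hd3 f (canc he1) (canc he2)))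

end Order

section NF

variable {n : ℕ}

theorem simple_compl {a : Braid n} (h : IsSimple a) : PrefixLE (a⁻¹ * Δ n) (Δ n) := by
  have := conj_pos' h.1
  simpa [PrefixLE, mul_assoc] using this

theorem Δ_ple_mul {a : Braid n} (h : a ∈ Pos n) : PrefixLE (Δ n) (a * Δ n) := by
  have := zpow_ple_mul (k := 1) (ple_refl (Δ n ^ (1 : ℤ))) h
  simpa using this

theorem lw_conv {a b : Braid n} (ha : IsSimple a) (hb : b ∈ Pos n) (h : LeftWeighted a b)
    {u : Braid n} (h1 : PrefixLE u b) (h2 : PrefixLE u (a⁻¹ * Δ n)) : PrefixLE u 1 := by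
  obtain ⟨m, hm1, hm2, hm3⟩ := exists_meet b (a⁻¹ * Δ n)
  have hm : m ∈ Pos n := one_ple.1 (hm3 1 (one_ple.2 hb) (one_ple.2 ha.2))
  have : m = 1 := by
    by_contra hne
    exact h m hm hm1 hne ⟨mul_mem ha.1 hm, mul_ple'.2 hm2⟩
  rw [← this]; exact hm3 u h1 h2

theorem prod_pos {l : List (Braid n)} (h : ∀ s ∈ l, IsSimple s) : l.prod ∈ Pos n :=
  list_prod_mem fun s hs => (h s hs).1

theorem F1 (l : List (Braid n)) : ∀ (a t : Braid n), List.IsChain LeftWeighted (a :: l) →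
    (∀ s ∈ a :: l, IsSimple s) → PrefixLE t (a :: l).prod → PrefixLE t (Δ n) → PrefixLE t a := by
  induction l with
  | nil => intro a t _ _ h _; simpa using h
  | cons b l ih =>
    intro a t hc hs h1 h2
    rw [List.isChain_cons_cons] at hc
    have ha : IsSimple a := hs a (by simp)
    have hb : IsSimple b := hs b (by simp)
    have h3 : PrefixLE (a⁻¹ * t) (b :: l).prod := by
      rw [mul_ple', inv_inv]; simpa using h1
    have h4 : PrefixLE (a⁻¹ * t) (Δ n) := by
      rw [mul_ple', inv_inv]; exact ple_trans h2 (Δ_ple_mul ha.1)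
    have h5 := ih b _ hc.2 (fun s hs' => hs s (List.mem_cons_of_mem _ hs')) h3 h4
    have h6 := lw_conv ha hb.1 hc.1 h5 (mul_ple.2 h2)
    rw [mul_ple', inv_inv, mul_one] at h6
    exact h6

theorem prod_compl {l : List (Braid n)} (h : ∀ s ∈ l, IsSimple s) :
    l.prod⁻¹ * Δ n ^ (l.length : ℤ) ∈ Pos n := by
  induction l with
  | nil => simp
  | cons a l ih =>
    have h1 := ih (fun s hs' => h s (List.mem_cons_of_mem _ hs'))
    have h2 := conj_zpow' (h a (by simp)).2 (l.length : ℤ)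
    have := mul_mem h1 h2
    convert this using 1
    simp only [List.prod_cons, List.length_cons, Nat.cast_add, Nat.cast_one]
    rw [add_comm (l.length : ℤ) 1, zpow_add, zpow_one]
    group

theorem F2 (l : List (Braid n)) : ∀ (b t : Braid n), List.IsChain LeftWeighted (l ++ [b]) →
    (∀ s ∈ l ++ [b], IsSimple s) →
    PrefixLE t ((l ++ [b]).prod⁻¹ * Δ n ^ ((l ++ [b]).length : ℤ)) →
    PrefixLE t (Δ n) → PrefixLE t (b⁻¹ * Δ n) := by
  induction l using List.reverseRecOn with
  | nil => intro b t _ _ h _; simpa using h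
  | append_singleton l a ih =>
    intro b t hc hs h1 h2
    have hb : IsSimple b := hs b (by simp)
    have ha : IsSimple a := hs a (by simp)
    rw [List.isChain_append] at hc
    obtain ⟨hc1, -, hc3⟩ := hc
    have hab : LeftWeighted a b := hc3 a (by simp) b (by simp)
    have e1 : PrefixLE (b * t * Δ n ^ (-1 : ℤ))
        ((l ++ [a]).prod⁻¹ * Δ n ^ ((l ++ [a]).length : ℤ)) := by
      rw [ple_mul_right', mul_ple']
      convert h1 using 1
      rw [List.prod_append (l₁ := l ++ [a]), List.length_append (as := l ++ [a])]
      simp only [List.prod_singleton, List.length_singleton, Nat.cast_add, Nat.cast_one, zpow_add,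
        neg_neg]
      group
    have e2 : PrefixLE (b * t * Δ n ^ (-1 : ℤ)) b := by
      rw [ple_mul_right', mul_ple']
      simpa using h2
    have e3 := ih a _ hc1 (fun s hs' => hs s (by simp at hs' ⊢; tauto)) e1 (ple_trans e2 hb.2)
    have e4 := lw_conv ha hb.1 hab e2 e3
    rw [ple_mul_right', mul_ple'] at e4
    simpa using e4

theorem inf_unique {x : Braid n} {p q : ℤ} (h : InfIs x p) (h' : InfIs x q) : p = q := by
  rcases lt_trichotomy p q with hl | hl | hl
  · exact (h.2 (ple_trans (Δ_zpow_mono (by omega)) h'.1)).elim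
  · exact hl
  · exact (h'.2 (ple_trans (Δ_zpow_mono (by omega)) h.1)).elim

theorem nf_B {x : Braid n} {p : ℤ} {l : List (Braid n)} (h : x = Δ n ^ p * l.prod) :
    x⁻¹ * Δ n ^ (p + l.length) = l.prod⁻¹ * Δ n ^ (l.length : ℤ) := by
  rw [h, mul_inv_rev, zpow_add]; group

theorem nf_sup {x : Braid n} {p : ℤ} {l : List (Braid n)} (h : IsNormalForm x p l) :
    InfIs x⁻¹ (-(p + l.length)) := by
  obtain ⟨hx, hinf, hs, hlast, hc⟩ := h
  constructor
  · rw [zpow_ple_iff, neg_neg, nf_B hx]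
    exact prod_compl hs
  · intro hcon
    have h1 : PrefixLE (Δ n) (l.prod⁻¹ * Δ n ^ (l.length : ℤ)) := by
      rw [← nf_B hx]
      rw [← ple_mul_right (p + l.length : ℤ), ← zpow_add] at hcon
      have : -(p + (l.length : ℤ)) + 1 + (p + l.length) = 1 := by ring
      rw [this, zpow_one] at hcon
      exact hcon
    rcases List.eq_nil_or_concat l with rfl | ⟨l0, b, hl⟩
    · apply hinf.2
      rw [hx]
      rw [zpow_add, zpow_one, mul_ple]
      simpa using h1
    · rw [List.concat_eq_append] at hl
      subst hl
      have h2 := F2 l0 b _ hc hs h1 (ple_refl _)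
      have h3 : PrefixLE (b * Δ n ^ (1 : ℤ)) (1 * Δ n ^ (1 : ℤ)) := by
        rw [mul_ple']; simpa using h2
      rw [ple_mul_right] at h3
      apply hlast
      rw [eq_one_of_ple (hs b (by simp)).1 h3]
      simp

theorem nf_clen {x : Braid n} {p : ℤ} {l : List (Braid n)} (h : IsNormalForm x p l) :
    clen x = l.length := by
  have : {r | ∃ p l, IsNormalForm x p l ∧ l.length = r} = {l.length} := by
    ext r
    constructor
    · rintro ⟨p', l', h', rfl⟩
      have e1 := inf_unique h.2.1 h'.2.1
      have e2 := inf_unique (nf_sup h) (nf_sup h')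
      simp only [Set.mem_singleton_iff]
      omega
    · rintro rfl
      exact ⟨p, l, h, rfl⟩
  rw [clen, this]; simp

/-- intrinsic characterisation of the preferred prefix -/
def IsW (x : Braid n) (p s : ℤ) (t : Braid n) : Prop :=
  PrefixLE t (x * Δ n ^ (-p)) ∧ PrefixLE t (x⁻¹ * Δ n ^ s) ∧ PrefixLE t (Δ n) ∧
    ∀ u, PrefixLE u (x * Δ n ^ (-p)) → PrefixLE u (x⁻¹ * Δ n ^ s) → PrefixLE u (Δ n) →
      PrefixLE u t

theorem nf_facts {x : Braid n} {p : ℤ} {l : List (Braid n)} (h : IsNormalForm x p l)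
    {x₁ xr : Braid n} (h1 : l.head? = some x₁) (hr : l.getLast? = some xr) :
    IsSimple x₁ ∧ IsSimple xr ∧
    PrefixLE (Δ n ^ p * x₁ * (Δ n ^ p)⁻¹) (x * Δ n ^ (-p)) ∧
    PrefixLE (xr⁻¹ * Δ n) (x⁻¹ * Δ n ^ (p + l.length)) ∧
    (∀ u, PrefixLE u (x * Δ n ^ (-p)) → PrefixLE u (Δ n) →
      PrefixLE u (Δ n ^ p * x₁ * (Δ n ^ p)⁻¹)) ∧
    (∀ u, PrefixLE u (x⁻¹ * Δ n ^ (p + l.length)) → PrefixLE u (Δ n) →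
      PrefixLE u (xr⁻¹ * Δ n)) := by
  obtain ⟨hx, hinf, hs, hlast, hc⟩ := h
  obtain ⟨l', hl'⟩ := List.head?_eq_some_iff.1 h1
  obtain ⟨l0, hl0⟩ := List.getLast?_eq_some_iff.1 hr
  rw [nf_B hx]
  refine ⟨hs _ (by simp [hl']), hs _ (by simp [hl0]), ?_, ?_, ?_, ?_⟩
  · rw [hx, zpow_neg, ← zpow_neg, ple_mul_right, mul_ple, hl', List.prod_cons]
    exact ple_mul (prod_pos (fun s hs' => hs s (by simp [hl', hs'])))
  · have h0 := prod_compl (l := l0) (fun s hs' => hs s (by simp [hl0, hs']))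
    rw [hl0]
    simp only [List.prod_append, List.prod_singleton, List.length_append, List.length_singleton,
      Nat.cast_add, Nat.cast_one, zpow_add, mul_inv_rev]
    rw [mul_assoc, mul_ple, ← mul_assoc]
    rw [zpow_one]
    exact Δ_ple_mul h0
  · intro u hu1 hu2
    rw [hx, zpow_neg] at hu1
    rw [← zpow_neg, ← neg_neg p, ← ple_mul_right', neg_neg, ← inv_inv (Δ n ^ p), ← mul_ple'] 
    rw [hl'] at hs hc
    refine F1 l' x₁ _ hc hs ?_ ?_
    · rw [mul_ple', inv_inv, ple_mul_right', zpow_neg, ← hl']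
      exact hu1
    · rw [mul_ple', inv_inv, ple_mul_right']
      have : Δ n ^ p * Δ n * Δ n ^ (-p) = Δ n := by
        rw [← zpow_add_one, ← zpow_add]; simp
      rw [this]; exact hu2
  · intro u hu1 hu2
    rw [hl0] at hs hc hu1
    exact F2 l0 xr u hc hs hu1 hu2

theorem nf_pp {x : Braid n} {p : ℤ} {l : List (Braid n)} (h : IsNormalForm x p l) {t : Braid n}
    (ht : (l = [] ∧ t = 1) ∨
      ∃ x₁ xr : Braid n, l.head? = some x₁ ∧ l.getLast? = some xr ∧
        t ∈ Pos n ∧ PrefixLE t (Δ n ^ p * x₁ * (Δ n ^ p)⁻¹) ∧ IsSimple (xr * t) ∧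
        ∀ t' : Braid n, t' ∈ Pos n → PrefixLE t' (Δ n ^ p * x₁ * (Δ n ^ p)⁻¹) →
          IsSimple (xr * t') → PrefixLE t' t) : t ∈ Pos n ∧ IsW x p (p + l.length) t := by
  rcases ht with ⟨rfl, rfl⟩ | ⟨x₁, xr, h1, hr, ht, ht1, ht2, ht3⟩
  · have hx := h.1
    simp only [List.prod_nil, mul_one] at hx
    refine ⟨one_mem _, ?_, ?_, one_ple.2 Δ_pos, ?_⟩
    · rw [hx, ← zpow_add]; simpa using ple_refl 1
    · rw [hx]; simpa using ple_refl 1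
    · intro u hu _ _
      rw [hx, ← zpow_add] at hu; simpa using hu
  · obtain ⟨s1, s2, f1, f2, f3, f4⟩ := nf_facts h h1 hr
    have ht2' : PrefixLE t (xr⁻¹ * Δ n) := mul_ple'.1 ht2.2
    refine ⟨ht, ple_trans ht1 f1, ple_trans ht2' f2, ple_trans ht2' (simple_compl s2), ?_⟩
    intro u hu1 hu2 hu3
    obtain ⟨m, hm1, hm2, hm3⟩ := exists_meet (Δ n ^ p * x₁ * (Δ n ^ p)⁻¹) (xr⁻¹ * Δ n)
    have hm : m ∈ Pos n := one_ple.1 (hm3 1 (one_ple.2 (conj_zpow s1.1 p)) (one_ple.2 s2.2))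
    exact ple_trans (hm3 u (f3 u hu1 hu3) (f4 u hu2 hu3))
      (ht3 m hm hm1 ⟨mul_mem s2.1 hm, mul_ple'.2 hm2⟩)

theorem chain_exists (k : ℕ) : ∀ P : Braid n, P ∈ Pos n → ex P ≤ k →
    ∃ l : List (Braid n), l.prod = P ∧ (∀ s ∈ l, IsSimple s) ∧ (1 : Braid n) ∉ l ∧
      List.IsChain LeftWeighted l := by
  have nil_case : ∃ l : List (Braid n), l.prod = 1 ∧ (∀ s ∈ l, IsSimple s) ∧ (1 : Braid n) ∉ l ∧
      List.IsChain LeftWeighted l := ⟨[], by simp⟩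
  induction k with
  | zero =>
    intro P hP h
    by_cases h1 : P = 1
    · rw [h1]; exact nil_case
    · have := ex_pos hP h1
      simp at h; omega
  | succ k ih =>
    intro P hP h
    rcases pos_cases hP with rfl | ⟨i, hi⟩
    · exact nil_case
    obtain ⟨a, ha1, ha2, ha3⟩ := exists_meet P (Δ n)
    have ha : a ∈ Pos n := one_ple.1 (ha3 1 (one_ple.2 hP) (one_ple.2 Δ_pos))
    have hane : a ≠ 1 := by
      rintro rfl
      have := eq_one_of_ple (σ_pos i) (ha3 _ hi (σ_ple_Δ i))
      have h2 := ex_σ i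
      rw [this, ex_one] at h2
      omega
    have hea := ex_pos ha hane
    obtain ⟨l, hl1, hl2, hl3, hl4⟩ := ih (a⁻¹ * P) ha1 (by
      rw [ex_mul, ex_inv]; push_cast at h; omega)
    refine ⟨a :: l, by simp [hl1], ?_, ?_, ?_⟩
    · intro s hs
      rcases List.mem_cons.1 hs with rfl | hs
      · exact ⟨ha, ha2⟩
      · exact hl2 s hs
    · simp only [List.mem_cons, not_or]
      exact ⟨hane.symm, hl3⟩
    · cases l with
      | nil => simp
      | cons b l =>
        rw [List.isChain_cons_cons]
        refine ⟨?_, hl4⟩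
        intro t ht htb hne hat
        apply hne
        apply eq_one_of_ple ht
        have h1 : PrefixLE (a * t) P := by
          rw [mul_ple', ← hl1, List.prod_cons]
          exact ple_trans htb (ple_mul (prod_pos fun s hs => hl2 s (by simp [hs])))
        have h2 := ha3 _ h1 hat.2
        rw [mul_ple', inv_mul_cancel] at h2
        exact h2

theorem ex_Bk (k : ℕ) (hk : k < n - 1) : ex (Bk (σ' n) k) = k + 1 := by
  induction k with
  | zero => simp [Bk, σ', hk]
  | succ k ih =>
    rw [Bk, ex_mul, ih (by omega), σ', dif_pos hk, ex_σ]
    push_cast; ring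

theorem ex_Dk (k : ℕ) (hk : k ≤ n - 1) : 2 * ex (Dk (σ' n) k) = k * (k + 1) := by
  induction k with
  | zero => simp [Dk]
  | succ k ih =>
    rw [Dk, ex_mul, ex_Bk k (by omega), mul_add, ih (by omega)]
    push_cast; ring

theorem ex_Δ (hn : 2 ≤ n) : ex (Δ n) = ((n * (n - 1) / 2 : ℕ) : ℤ) := by
  have h := ex_Dk (n := n) (n - 1) le_rfl
  rw [← Δ_eq] at h
  obtain ⟨m, rfl⟩ : ∃ m, n = m + 1 := ⟨n - 1, by omega⟩
  simp only [Nat.add_sub_cancel] at h ⊢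
  push_cast at h ⊢
  rw [mul_comm ((m : ℤ) + 1), ← h]
  omega

theorem nf_exists (hn : 2 ≤ n) (x : Braid n) : ∃ p l, IsNormalForm x p l := by
  have hΔ : 1 ≤ ex (Δ n) := by
    rw [ex_Δ hn]
    have : 1 ≤ n * (n - 1) / 2 := by
      rw [Nat.le_div_iff_mul_le (by norm_num)]
      calc 1 * 2 = 2 * 1 := by norm_num
        _ ≤ n * (n - 1) := Nat.mul_le_mul hn (by omega)
    exact_mod_cast this
  obtain ⟨p, hp1, hp2⟩ := Int.exists_greatest_of_bdd (P := fun k => PrefixLE (Δ n ^ k) x) (by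
    refine ⟨|ex x|, fun k hk => ?_⟩
    have h1 := ex_nonneg hk
    simp only [ex_mul, ex_inv, ex_zpow] at h1
    have h2 := le_abs_self (ex x)
    have h3 := abs_nonneg (ex x)
    by_contra hlt
    nlinarith) (by
    obtain ⟨k, hk⟩ := exists_pow x
    exact ⟨-k, by simpa [PrefixLE] using hk⟩)
  obtain ⟨l, hl1, hl2, hl3, hl4⟩ := chain_exists (ex ((Δ n ^ p)⁻¹ * x)).toNat _ hp1 (by omega)
  refine ⟨p, l, by rw [hl1]; simp, ⟨hp1, fun h => ?_⟩, hl2, ?_, hl4⟩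
  · have := hp2 _ h; omega
  · intro h
    exact hl3 (List.mem_of_getLast? h)

theorem pp_exists (hn : 2 ≤ n) (x : Braid n) : ∃ t, IsPreferredPrefix x t := by
  obtain ⟨p, l, h⟩ := nf_exists hn x
  cases hl : l with
  | nil => exact ⟨1, p, l, h, Or.inl ⟨hl, rfl⟩⟩
  | cons x₁ l' =>
    have h1 : l.head? = some x₁ := by simp [hl]
    obtain ⟨xr, hr⟩ : ∃ xr, l.getLast? = some xr := by
      rw [hl]; exact ⟨_, List.getLast?_eq_getLast_of_ne_nil (by simp)⟩
    obtain ⟨s1, s2, -⟩ := nf_facts h h1 hr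
    obtain ⟨m, hm1, hm2, hm3⟩ := exists_meet (Δ n ^ p * x₁ * (Δ n ^ p)⁻¹) (xr⁻¹ * Δ n)
    have hm : m ∈ Pos n := one_ple.1 (hm3 1 (one_ple.2 (conj_zpow s1.1 p)) (one_ple.2 s2.2))
    exact ⟨m, p, l, h, Or.inr ⟨x₁, xr, h1, hr, hm, hm1, ⟨mul_mem s2.1 hm, mul_ple'.2 hm2⟩,
      fun t' _ h1 h2 => hm3 t' h1 (mul_ple'.1 h2.2)⟩⟩

theorem pp_data {x t : Braid n} (h : IsPreferredPrefix x t) : ∃ p s : ℤ, p ≤ s ∧ InfIs x p ∧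
    InfIs x⁻¹ (-s) ∧ (clen x : ℤ) = s - p ∧ t ∈ Pos n ∧ IsW x p s t := by
  obtain ⟨p, l, h, ht⟩ := h
  refine ⟨p, p + l.length, by omega, h.2.1, nf_sup h, by rw [nf_clen h]; ring, nf_pp h ht⟩

/-- coprimality form of rigidity -/
def Cop (y : Braid n) (p s : ℤ) : Prop :=
  ∀ u, PrefixLE u (y * Δ n ^ (-p)) → PrefixLE u (y⁻¹ * Δ n ^ s) → PrefixLE u 1

theorem sup_pos {y : Braid n} {s : ℤ} (h : PrefixLE (Δ n ^ (-s)) y⁻¹) :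
    y⁻¹ * Δ n ^ s ∈ Pos n := by
  rw [zpow_ple_iff, neg_neg] at h; exact h

theorem cop_of_W {y : Braid n} {p s : ℤ} (h : IsW y p s 1) (hp : PrefixLE (Δ n ^ p) y)
    (hs : PrefixLE (Δ n ^ (-s)) y⁻¹) : Cop y p s := by
  intro u hu1 hu2
  obtain ⟨m, hm1, hm2, hm3⟩ := exists_meet (y * Δ n ^ (-p)) (y⁻¹ * Δ n ^ s)
  have hm : m ∈ Pos n :=
    one_ple.1 (hm3 1 (one_ple.2 (zpow_ple_iff.1 hp)) (one_ple.2 (sup_pos hs)))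
  rcases pos_cases hm with rfl | ⟨i, hi⟩
  · exact hm3 u hu1 hu2
  · exfalso
    have := eq_one_of_ple (σ_pos i)
      (h.2.2.2 _ (ple_trans hi hm1) (ple_trans hi hm2) (σ_ple_Δ i))
    have h2 := ex_σ i
    rw [this, ex_one] at h2
    omega

theorem Cop.inv {y : Braid n} {p s : ℤ} (h : Cop y p s) : Cop y⁻¹ (-s) (-p) := by
  intro u h1 h2
  rw [neg_neg] at h1
  rw [inv_inv] at h2
  exact h u h2 h1

theorem cop_pow {y : Braid n} {p s : ℤ} (h : Cop y p s) (hp : PrefixLE (Δ n ^ p) y) (m : ℕ) :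
    ∀ t, PrefixLE t (y ^ (m + 1) * Δ n ^ (-p * (m + 1))) → PrefixLE t (Δ n ^ (s - p)) →
      PrefixLE t (y * Δ n ^ (-p)) := by
  induction m with
  | zero => intro t h1 _; simpa using h1
  | succ m ih =>
    intro t h1 h2
    have hA := zpow_ple_iff.1 hp
    have e1 : PrefixLE (y⁻¹ * t * Δ n ^ p) (y ^ (m + 1) * Δ n ^ (-p * (m + 1))) := by
      rw [ple_mul_right', mul_ple', inv_inv]
      convert h1 using 1
      rw [pow_succ' y (m + 1), mul_assoc, mul_assoc, ← zpow_add]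
      congr 3
      push_cast; ring
    have e2 : PrefixLE (y⁻¹ * t * Δ n ^ p) (Δ n ^ (s - p)) := by
      rw [ple_mul_right', mul_ple', inv_inv]
      refine ple_trans h2 ?_
      have := zpow_ple_mul (ple_refl (Δ n ^ (s - p))) hA
      convert this using 1
      rw [mul_assoc, ← zpow_add, ← zpow_add, add_comm]
    have e3 := ih _ e1 e2
    have e4 : PrefixLE (y⁻¹ * t * Δ n ^ p) (y⁻¹ * Δ n ^ s) := by
      rw [ple_mul_right', mul_assoc, mul_ple, ← zpow_add]
      exact h2
    have e5 := h _ e3 e4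
    rw [ple_mul_right', mul_ple', inv_inv, one_mul] at e5
    exact e5

theorem inf_le {x y g : Braid n} {p s : ℤ} (hps : p ≤ s) (h : Cop y p s) (hp : InfIs y p)
    (hs : PrefixLE (Δ n ^ (-s)) y⁻¹) (hg : g ∈ Pos n) (hxy : g⁻¹ * x * g = y) :
    ¬ PrefixLE (Δ n ^ (p + 1)) x := by
  intro hx
  obtain ⟨c, hc⟩ := exists_pow g⁻¹
  have hc' : PrefixLE (Δ n ^ (-(c : ℤ))) g⁻¹ := by simpa [PrefixLE] using hc
  have hpow : ∀ m : ℕ, PrefixLE (Δ n ^ ((p + 1) * m)) (x ^ m) := by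
    intro m
    induction m with
    | zero => simpa using ple_refl 1
    | succ m ih =>
      rw [pow_succ]
      have := zpow_ple_mul2 ih hx
      convert this using 2
      push_cast; ring
  have hy : y ^ (c + 1) = g⁻¹ * x ^ (c + 1) * g := by
    have := conj_pow (a := g⁻¹) (b := x) (i := c + 1)
    rw [inv_inv, hxy] at this
    exact this
  have h1 : PrefixLE (Δ n ^ (p * (c + 1) + 1)) (y ^ (c + 1)) := by
    rw [hy]
    refine ple_trans ?_ (ple_mul hg)
    have := zpow_ple_mul2 hc' (hpow (c + 1))
    convert this using 2
    push_cast; ring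
  have h2 : PrefixLE (Δ n) (y ^ (c + 1) * Δ n ^ (-p * (c + 1))) := by
    rw [← ple_mul_right (-p * (c + 1)), ← zpow_add] at h1
    have e : p * ((c : ℤ) + 1) + 1 + -p * (c + 1) = 1 := by ring
    rw [e, zpow_one] at h1
    exact h1
  apply hp.2
  have h3 : PrefixLE (Δ n) (y * Δ n ^ (-p)) := by
    rcases hps.lt_or_eq with hlt | rfl
    · apply cop_pow h hp.1 c _ h2
      have := Δ_zpow_mono (n := n) (k := 1) (m := s - p) (by omega)
      simpa using this
    · have e : y = Δ n ^ p := (ple_antisymm hp.1 (sup_pos hs)).symm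
      rw [e, ← zpow_natCast, ← zpow_mul, ← zpow_add] at h2
      rw [e, ← zpow_add]
      have e : p * ((c + 1 : ℕ) : ℤ) + -p * (c + 1) = p + -p := by push_cast; ring
      rw [e] at h2; exact h2
  rw [← ple_mul_right' ] at *
  rw [add_comm, zpow_add, zpow_one]
  exact h3

theorem pp_ple {x y g t : Braid n} {p s : ℤ} (h : Cop y p s) (hg : g ∈ Pos n)
    (hxy : g⁻¹ * x * g = y) (ht : IsW x p s t) : PrefixLE t g := by
  have e : g⁻¹ * x = y * g⁻¹ := by rw [← hxy]; group
  have e' : g⁻¹ * x⁻¹ = y⁻¹ * g⁻¹ := by rw [← hxy]; group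
  have key : ∀ k : ℤ, PrefixLE (g⁻¹ * Δ n ^ k) (Δ n ^ k) := by
    intro k
    rw [mul_ple', inv_inv]
    exact zpow_ple_mul (ple_refl _) hg
  have h1 : PrefixLE (g⁻¹ * t) (y * Δ n ^ (-p)) := by
    refine ple_trans (mul_ple.2 ht.1) ?_
    rw [← mul_assoc, e, mul_assoc, mul_ple]
    exact key _
  have h2 : PrefixLE (g⁻¹ * t) (y⁻¹ * Δ n ^ s) := by
    refine ple_trans (mul_ple.2 ht.2.1) ?_
    rw [← mul_assoc, e', mul_assoc, mul_ple]
    exact key _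
  have := h _ h1 h2
  rw [mul_ple', inv_inv, mul_one] at this
  exact this

theorem conj_inf {z t : Braid n} {k : ℤ} (ht : t ∈ Pos n) (h : PrefixLE t (z * Δ n ^ (-k))) :
    PrefixLE (Δ n ^ k) (t⁻¹ * z * t) := by
  rw [zpow_ple_iff]
  have := mul_mem h (conj_zpow ht k)
  convert this using 1
  group

theorem step (hn : 2 ≤ n) {y : Braid n} {p s : ℤ} (hps : p ≤ s) (h : Cop y p s)
    (hp : InfIs y p) (hs : InfIs y⁻¹ (-s)) {x g : Braid n} (hg : g ∈ Pos n)
    (hxy : g⁻¹ * x * g = y) (hx1 : PrefixLE (Δ n ^ p) x) (hx2 : PrefixLE (Δ n ^ (-s)) x⁻¹) :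
    Rigid x ∨ ∃ g' : Braid n, g' ∈ Pos n ∧ g'⁻¹ * slide x * g' = y ∧
      PrefixLE (Δ n ^ p) (slide x) ∧ PrefixLE (Δ n ^ (-s)) (slide x)⁻¹ ∧ ex g' + 1 ≤ ex g := by
  have hinfx : InfIs x p := ⟨hx1, inf_le hps h hp hs.1 hg hxy⟩
  have hsupx : InfIs x⁻¹ (-s) := ⟨hx2, inf_le (x := x⁻¹) (y := y⁻¹) (p := -s) (s := -p)
    (by omega) h.inv hs (by rw [neg_neg, inv_inv]; exact hp.1) hg (by rw [← hxy]; group)⟩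
  have hex := pp_exists hn x
  have hsl : slide x = hex.choose⁻¹ * x * hex.choose := by
    unfold slide; rw [dif_pos hex]
  have ht := hex.choose_spec
  rw [hsl]
  generalize hex.choose = t at ht
  obtain ⟨p', s', -, hp', hs', -, htp, W⟩ := pp_data ht
  obtain rfl := inf_unique hinfx hp'
  have e := inf_unique hsupx hs'
  obtain rfl : s = s' := by omega
  by_cases h1 : t = 1
  · left; rw [h1] at ht; exact ht
  right
  have h2 := ex_pos htp h1
  refine ⟨t⁻¹ * g, pp_ple h hg hxy W, by rw [← hxy]; group, conj_inf htp W.1, ?_, ?_⟩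
  · have := conj_inf (z := x⁻¹) (k := -s) htp (by rw [neg_neg]; exact W.2.1)
    convert this using 1
    group
  · rw [ex_mul, ex_inv]; omega

theorem main_ind (hn : 2 ≤ n) {y : Braid n} {p s : ℤ} (hps : p ≤ s) (h : Cop y p s)
    (hp : InfIs y p) (hs : InfIs y⁻¹ (-s)) (N : ℕ) : ∀ x g : Braid n, g ∈ Pos n →
    g⁻¹ * x * g = y → PrefixLE (Δ n ^ p) x → PrefixLE (Δ n ^ (-s)) x⁻¹ → ex g ≤ N →
    ∃ k : ℕ, (k : ℤ) ≤ ex g ∧ Rigid (slide^[k] x) := by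
  induction N with
  | zero =>
    intro x g hg hxy hx1 hx2 hN
    have h0 := ex_nonneg hg
    rcases step hn hps h hp hs hg hxy hx1 hx2 with hr | ⟨g', hg', -, -, -, h5⟩
    · exact ⟨0, by simpa using h0, hr⟩
    · have := ex_nonneg hg'
      simp at hN
      omega
  | succ N ih =>
    intro x g hg hxy hx1 hx2 hN
    have h0 := ex_nonneg hg
    rcases step hn hps h hp hs hg hxy hx1 hx2 with hr | ⟨g', hg', h2, h3, h4, h5⟩
    · exact ⟨0, by simpa using h0, hr⟩
    · obtain ⟨k, hk, hr⟩ := ih (slide x) g' hg' h2 h3 h4 (by push_cast at hN; omega)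
      exact ⟨k + 1, by push_cast; omega, by rw [Function.iterate_succ_apply]; exact hr⟩

theorem ex_le_len (hn : 2 ≤ n) {g : Braid n} (hg : g ∈ Pos n) :
    ex g ≤ ((n * (n - 1) / 2 * len g : ℕ) : ℤ) := by
  have hne : {k | ∃ l : List (Braid n), (∀ a ∈ l, SimpleOrInv a) ∧ l.prod = g ∧
      l.length = k}.Nonempty := by
    obtain ⟨l, h1, h2, -⟩ := chain_exists (ex g).toNat g hg (by omega)
    exact ⟨_, l, fun a ha => Or.inl (h2 a ha), h1, rfl⟩
  obtain ⟨l, h1, h2, h3⟩ := Nat.sInf_mem hne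
  change l.length = len g at h3
  have h4 : ∀ l : List (Braid n), (∀ a ∈ l, SimpleOrInv a) → ex l.prod ≤ ex (Δ n) * l.length := by
    intro l hl
    induction l with
    | nil => simp
    | cons a l ih =>
      have h5 := ih (fun b hb => hl b (List.mem_cons_of_mem _ hb))
      have h6 : ex a ≤ ex (Δ n) := by
        rcases hl a (by simp) with h | h
        · have := ex_nonneg h.2
          rw [ex_mul, ex_inv] at this; omega
        · have h7 := ex_nonneg h.1
          have := ex_nonneg (Δ_pos (n := n))
          rw [ex_inv] at h7; omega
      rw [List.prod_cons, ex_mul, List.length_cons, Nat.cast_add, Nat.cast_one, mul_add, mul_one]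
      omega
  have h5 := h4 l h1
  rw [h2, h3, ex_Δ hn] at h5
  rw [Nat.cast_mul]
  exact h5

end NF

/-- **Theorem (after Gebhardt–González-Meneses).** Let `x ∈ B_n` be a super summit element
which is not rigid but is conjugate to a rigid braid.  If `g` is any positive braid such
that `g⁻¹ x g` is rigid, then some iterate `𝔰^k(x)` with `1 ≤ k ≤ (n(n-1)/2)·|g|` is
rigid. -/
theorem iterated_sliding_reaches_rigid (n : ℕ) (x : Braid n)
    (hx : InSSS x x) (hnotrigid : ¬Rigid x)
    (hconj : ∃ z : Braid n, IsConj x z ∧ Rigid z)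
    (g : Braid n) (hg : g ∈ Pos n) (hrigid : Rigid (g⁻¹ * x * g)) :
    ∃ k : ℕ, 1 ≤ k ∧ k ≤ (n * (n - 1) / 2) * len g ∧ Rigid (slide^[k] x) := by
  obtain ⟨p, s, hps, hp, hs, hc, -, W⟩ := pp_data hrigid
  have hn : 2 ≤ n := by
    by_contra hlt
    have h0 : n - 1 = 0 := by omega
    have : Δ n = 1 := by
      have h3 : ∀ m : ℕ, m = 0 → Dk (σ' n) m = 1 := by rintro m rfl; rfl
      rw [Δ_eq]; exact h3 _ h0
    have h1 := hp.1
    have h2 := hp.2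
    rw [this, one_zpow] at h1 h2
    exact h2 h1
  have hcop := cop_of_W W hp.1 hs.1
  obtain ⟨p0, s0, hps0, hp0, hs0, hc0, -, -⟩ := pp_data (pp_exists hn x).choose_spec
  have hle : clen x ≤ clen (g⁻¹ * x * g) := hx.2 _ (isConj_iff.2 ⟨g⁻¹, by rw [inv_inv]⟩)
  have hple : p0 ≤ p := by
    by_contra hlt
    exact inf_le hps hcop hp hs.1 hg rfl (ple_trans (Δ_zpow_mono (by omega)) hp0.1)
  have hsle : s ≤ s0 := by
    by_contra hlt
    exact inf_le (x := x⁻¹) (y := (g⁻¹ * x * g)⁻¹) (p := -s) (s := -p) (by omega) hcop.inv hs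
      (by rw [neg_neg, inv_inv]; exact hp.1) hg (by group)
      (ple_trans (Δ_zpow_mono (by omega)) hs0.1)
  have hle' : (clen x : ℤ) ≤ clen (g⁻¹ * x * g) := by exact_mod_cast hle
  obtain rfl : p0 = p := by omega
  obtain rfl : s0 = s := by omega
  obtain ⟨k, hk, hr⟩ := main_ind hn hps hcop hp hs (ex g).toNat x g hg rfl hp0.1 hs0.1 (by omega)
  refine ⟨k, ?_, ?_, hr⟩
  · rcases Nat.eq_zero_or_pos k with rfl | h
    · exact (hnotrigid hr).elim
    · exact h
  · have := ex_le_len hn hg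
    exact_mod_cast hk.trans this

end Braids
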